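/- Let ξ be a state on ℓ^∞ invariant under the unit shift T_1. Then ξ is invariant under T_j for every j ∈ ℕ, and for every a > 0, ξ({f(k+a)}_{k≥1}) = ξ({f(k)}_{k≥1}). -/

import Mathlib

open Filter

/-- A bounded real sequence (an element of `ℓ^∞`). -/
def IsBddSeq (a : ℕ → ℝ) : Prop := ∃ C, ∀ k, |a k| ≤ C

/-- A state on `ℓ^∞`: a positive linear functional with `ξ(1) = 1`
(linearity and positivity are required on bounded sequences). -/
def IsLinfState (ξ : (ℕ → ℝ) → ℝ) : Prop :=
  (∀ a b : ℕ → ℝ, IsBddSeq a → IsBddSeq b → ξ (a + b) = ξ a + ξ b) ∧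
  (∀ (c : ℝ) (a : ℕ → ℝ), IsBddSeq a → ξ (c • a) = c * ξ a) ∧
  (∀ a : ℕ → ℝ, IsBddSeq a → (∀ k, 0 ≤ a k) → 0 ≤ ξ a) ∧
  ξ (fun _ => 1) = 1

/-- A generalised limit: a state on `ℓ^∞` with
`liminf a ≤ ξ a ≤ limsup a` for every bounded nonnegative sequence. -/
def IsGenLim (ξ : (ℕ → ℝ) → ℝ) : Prop :=
  IsLinfState ξ ∧
  ∀ a : ℕ → ℝ, IsBddSeq a → (∀ k, 0 ≤ a k) →
    liminf a atTop ≤ ξ a ∧ ξ a ≤ limsup a atTop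

/-- Invariance under the unit shift `T_1`. -/
def ShiftInv (ξ : (ℕ → ℝ) → ℝ) : Prop :=
  ∀ a : ℕ → ℝ, IsBddSeq a → ξ (fun k => a (k + 1)) = ξ a

/-- Invariance under the dilations `D_j`, `D_j(a)_k = a_{⌈k/j⌉}`
(`⌈k/j⌉ = (k + j - 1)/j` in natural division). -/
def DilInv (ξ : (ℕ → ℝ) → ℝ) : Prop :=
  ∀ j : ℕ, 0 < j → ∀ a : ℕ → ℝ, IsBddSeq a →
    ξ (fun k => a ((k + j - 1) / j)) = ξ a

/-!
Write `φ b = ξ (f (k + b))_k`. As `g` is nondecreasing and `|f| ≤ C`, `f t` exceeds `f (t + d)` by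
at most `C d / t`, which tends to `0`; a shift-invariant state does not see such an error, so `φ` is
monotone. Shift invariance also gives `φ (b + 1) = φ b`, and a monotone periodic function is
constant.
-/

theorem eq_of_monotone_of_periodic {α β : Type*} [AddCommGroup α] [PartialOrder α]
    [IsOrderedAddMonoid α] [Archimedean α] [PartialOrder β] {φ : α → β} {c : α}
    (hmono : Monotone φ) (hper : Function.Periodic φ c) (hc : 0 < c) (x y : α) : φ x = φ y := by
  have le (x y : α) : φ x ≤ φ y := by
    obtain ⟨n, hn⟩ := Archimedean.arch (x - y) hc
    calc
      φ x ≤ φ (y + n • c) := hmono (sub_le_iff_le_add'.1 hn)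
      _ = φ y := hper.nsmul n y
  exact le_antisymm (le x y) (le y x)

theorem div_le_div_add_mul_sub_div {K : Type*} [Field K] [LinearOrder K] [IsStrictOrderedRing K]
    {x y p q C : K} (hx : 0 < x) (hxy : x ≤ y) (hpq : p ≤ q) (hC : q / y ≤ C) :
    p / x ≤ q / y + C * ((y - x) / x) := by
  have hy : 0 < y := hx.trans_le hxy
  calc
    p / x ≤ q / x := by gcongr
    _ = q / y + q / y * ((y - x) / x) := by field_simp; ring
    _ ≤ q / y + C * ((y - x) / x) := by
      have : 0 ≤ (y - x) / x := div_nonneg (sub_nonneg.2 hxy) hx.le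
      gcongr

section BoundedSequences

variable {a b : ℕ → ℝ}

theorem IsBddSeq.add (ha : IsBddSeq a) (hb : IsBddSeq b) : IsBddSeq (a + b) := by
  obtain ⟨A, hA⟩ := ha
  obtain ⟨B, hB⟩ := hb
  exact ⟨A + B, fun k => (abs_add_le _ _).trans (add_le_add (hA k) (hB k))⟩

theorem IsBddSeq.const_smul (c : ℝ) (ha : IsBddSeq a) : IsBddSeq (c • a) := by
  obtain ⟨A, hA⟩ := ha
  refine ⟨|c| * A, fun k => ?_⟩
  rw [Pi.smul_apply, smul_eq_mul, abs_mul]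
  exact mul_le_mul_of_nonneg_left (hA k) (abs_nonneg c)

theorem IsBddSeq.sub (ha : IsBddSeq a) (hb : IsBddSeq b) : IsBddSeq (a - b) := by
  simpa only [neg_one_smul, ← sub_eq_add_neg] using ha.add (hb.const_smul (-1))

theorem isBddSeq_const (c : ℝ) : IsBddSeq fun _ => c := ⟨|c|, fun _ => le_rfl⟩

theorem IsBddSeq.comp (ha : IsBddSeq a) (u : ℕ → ℕ) : IsBddSeq fun k => a (u k) :=
  ha.imp fun _ hA k => hA (u k)

theorem isBddSeq_of_eventually_abs_le {C : ℝ} (h : ∀ᶠ k in atTop, |a k| ≤ C) : IsBddSeq a := by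
  obtain ⟨M, hM⟩ := (isBoundedUnder_of_eventually_le h).bddAbove_range
  exact ⟨M, fun k => hM ⟨k, rfl⟩⟩

end BoundedSequences

theorem tendsto_natCast_add_atTop (b : ℝ) : Tendsto (fun k : ℕ => (k : ℝ) + b) atTop atTop :=
  tendsto_atTop_add_const_right _ b tendsto_natCast_atTop_atTop

theorem isBddSeq_translate {f : ℝ → ℝ} (hf : ∃ C, ∀ᶠ t in atTop, |f t| ≤ C) (b : ℝ) :
    IsBddSeq fun k => f (k + b) :=
  let ⟨_, hC⟩ := hf
  isBddSeq_of_eventually_abs_le ((tendsto_natCast_add_atTop b).eventually hC)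

theorem eventually_le_translate_add {f g : ℝ → ℝ} (hf : ∃ C, ∀ᶠ t in atTop, |f t| ≤ C)
    (hfg : ∀ᶠ t in atTop, f t = g t / t) (hg : ∃ T, MonotoneOn g (Set.Ici T))
    {d ε : ℝ} (hd : 0 ≤ d) (hε : 0 < ε) : ∀ᶠ t in atTop, f t ≤ f (t + d) + ε := by
  obtain ⟨C, hC⟩ := hf
  obtain ⟨T, hT⟩ := hg
  have translate : Tendsto (fun t : ℝ => t + d) atTop atTop :=
    tendsto_atTop_add_const_right _ d tendsto_id
  have error : Tendsto (fun t : ℝ => C * (d / t)) atTop (nhds 0) := by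
    simpa only [mul_zero, id] using (tendsto_const_nhds.div_atTop tendsto_id).const_mul C
  filter_upwards [hfg, translate.eventually hfg, translate.eventually hC,
    error.eventually_le_const hε, eventually_gt_atTop 0, eventually_ge_atTop T]
    with t ft ftd bound small t_pos T_le
  have le_td : t ≤ t + d := le_add_of_nonneg_right hd
  have g_le : g t ≤ g (t + d) := hT T_le (T_le.trans le_td) le_td
  have quotient_le : g (t + d) / (t + d) ≤ C := ftd ▸ (le_abs_self _).trans bound
  calc
    f t ≤ f (t + d) + C * (d / t) := by
      simpa only [ft, ftd, add_sub_cancel_left] using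
        div_le_div_add_mul_sub_div t_pos le_td g_le quotient_le
    _ ≤ f (t + d) + ε := by gcongr

section States

variable {ξ : (ℕ → ℝ) → ℝ}

theorem IsLinfState.mono (hξ : IsLinfState ξ) {a b : ℕ → ℝ} (ha : IsBddSeq a) (hb : IsBddSeq b)
    (hab : a ≤ b) : ξ a ≤ ξ b := by
  obtain ⟨map_add, -, map_nonneg, -⟩ := hξ
  calc
    ξ a ≤ ξ a + ξ (b - a) :=
      le_add_of_nonneg_right (map_nonneg _ (hb.sub ha) fun k => sub_nonneg.2 (hab k))
    _ = ξ b := by rw [← map_add _ _ ha (hb.sub ha), add_sub_cancel]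

theorem IsLinfState.map_const (hξ : IsLinfState ξ) (c : ℝ) : ξ (fun _ => c) = c := by
  obtain ⟨-, map_smul, -, map_one⟩ := hξ
  calc
    ξ (fun _ => c) = ξ (c • fun _ => 1) := by
      congr 1
      exact funext fun _ => (mul_one c).symm
    _ = c := by rw [map_smul _ _ (isBddSeq_const 1), map_one, mul_one]

theorem IsLinfState.map_add_const (hξ : IsLinfState ξ) {a : ℕ → ℝ} (ha : IsBddSeq a) (c : ℝ) :
    ξ (a + fun _ => c) = ξ a + c := by
  rw [hξ.1 _ _ ha (isBddSeq_const c), hξ.map_const]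

theorem ShiftInv.map_shift (hT : ShiftInv ξ) (j : ℕ) {a : ℕ → ℝ} (ha : IsBddSeq a) :
    ξ (fun k => a (k + j)) = ξ a := by
  induction j with
  | zero => rfl
  | succ j ih =>
    calc
      ξ (fun k => a (k + (j + 1))) = ξ (fun k => a (k + 1 + j)) := by
        simp only [add_assoc, add_comm 1]
      _ = ξ (fun k => a (k + j)) := hT _ (ha.comp (· + j))
      _ = ξ a := ih

theorem IsLinfState.map_le_map_of_eventually_le_add (hξ : IsLinfState ξ) (hT : ShiftInv ξ)
    {a b : ℕ → ℝ} (ha : IsBddSeq a) (hb : IsBddSeq b)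
    (hab : ∀ ε > 0, ∀ᶠ k in atTop, a k ≤ b k + ε) : ξ a ≤ ξ b := by
  refine le_of_forall_pos_le_add fun ε hε => ?_
  obtain ⟨N, hN⟩ := eventually_atTop.1 (hab ε hε)
  have hbN : IsBddSeq fun k => b (k + N) := hb.comp (· + N)
  calc
    ξ a = ξ (fun k => a (k + N)) := (hT.map_shift N ha).symm
    _ ≤ ξ ((fun k => b (k + N)) + fun _ => ε) :=
      hξ.mono (ha.comp (· + N)) (hbN.add (isBddSeq_const ε)) fun k => hN _ (Nat.le_add_left N k)
    _ = ξ (fun k => b (k + N)) + ε := hξ.map_add_const hbN ε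
    _ = ξ b + ε := by rw [hT.map_shift N hb]

theorem ShiftInv.periodic_translate (hT : ShiftInv ξ) {f : ℝ → ℝ}
    (hf : ∃ C, ∀ᶠ t in atTop, |f t| ≤ C) :
    Function.Periodic (fun b : ℝ => ξ fun k => f (k + b)) 1 := fun b => by
  simpa only [Nat.cast_add_one, add_assoc, add_comm (1 : ℝ)] using hT _ (isBddSeq_translate hf b)

theorem IsLinfState.monotone_translate (hξ : IsLinfState ξ) (hT : ShiftInv ξ) {f g : ℝ → ℝ}
    (hf : ∃ C, ∀ᶠ t in atTop, |f t| ≤ C) (hfg : ∀ᶠ t in atTop, f t = g t / t)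
    (hg : ∃ T, MonotoneOn g (Set.Ici T)) :
    Monotone fun b : ℝ => ξ fun k => f (k + b) := fun b c hbc => by
  refine hξ.map_le_map_of_eventually_le_add hT (isBddSeq_translate hf b) (isBddSeq_translate hf c)
    fun ε hε => ?_
  have := (tendsto_natCast_add_atTop b).eventually
    (eventually_le_translate_add hf hfg hg (sub_nonneg.2 hbc) hε)
  simpa only [add_assoc, add_sub_cancel] using this

end States

theorem shiftInv_iterate_and_real_translation_general
    {ξ : (ℕ → ℝ) → ℝ} (hst : IsLinfState ξ) (hT : ShiftInv ξ)
    {f g : ℝ → ℝ} (hf : ∃ C, ∀ᶠ t in atTop, |f t| ≤ C)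
    (hfg : ∀ᶠ t in atTop, f t = g t / t) (hg : ∃ T, MonotoneOn g (Set.Ici T)) :
    (∀ j : ℕ, ∀ a : ℕ → ℝ, IsBddSeq a → ξ (fun k => a (k + j)) = ξ a) ∧
    (∀ b : ℝ, ξ (fun k => f ((k : ℝ) + b)) = ξ (fun k => f (k : ℝ))) := by
  refine ⟨fun j a => hT.map_shift j, fun b => ?_⟩
  simpa only [add_zero] using eq_of_monotone_of_periodic (hst.monotone_translate hT hf hfg hg)
    (hT.periodic_translate hf) one_pos b 0

/-- if a state `ξ` on `ℓ^∞` is invariant under the unit shift `T_1`,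
then it is invariant under `T_j` for every `j ∈ ℕ`, and for every `a > 0`,
`ξ({f(k+a)}_k) = ξ({f(k)}_k)`, where `f` is bounded on `[0,∞)` with `f(t) = g(t)/t`
for `t > 0` and `g` nondecreasing on `[0,∞)`. -/
theorem shiftInv_iterate_and_real_translation
    (ξ : (ℕ → ℝ) → ℝ) (hst : IsLinfState ξ) (hT : ShiftInv ξ)
    (f g : ℝ → ℝ) (hfb : ∃ C, ∀ t ≥ (0 : ℝ), |f t| ≤ C)
    (hfg : ∀ t > (0 : ℝ), f t = g t / t) (hg : MonotoneOn g (Set.Ici 0)) :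
    (∀ j : ℕ, ∀ a : ℕ → ℝ, IsBddSeq a → ξ (fun k => a (k + j)) = ξ a) ∧
    (∀ b : ℝ, 0 < b → ξ (fun k => f ((k : ℝ) + b)) = ξ (fun k => f (k : ℝ))) := by
  have general := shiftInv_iterate_and_real_translation_general hst hT
    (hfb.imp fun _ hC => (eventually_ge_atTop 0).mono hC) ((eventually_gt_atTop 0).mono hfg) ⟨0, hg⟩
  exact general.imp_right fun translate b _ => translate b
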